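/- Let f : ℝ → ℂ be locally integrable such that F(x) = ∫_0^x f has finite limits as x → ∞ and as x → −∞. Let g : ℝ → ℝ have bounded variation on ℝ and let h : ℝ → ℂ be Lebesgue integrable on ℝ. For each x define f∗g(x) = lim_{T₁,T₂→∞} ∫_{-T₁}^{T₂} f(x−t) g(t) dt (this limit exists for every x), define g∗h(x) = ∫_{-∞}^{∞} g(x−y) h(y) dy (a Lebesgue integral, since g is bounded), and define (f∗g)∗h(x) = ∫_{-∞}^{∞} (f∗g)(x−y) h(y) dy and f∗(g∗h)(x) = lim_{T₁,T₂→∞} ∫_{-T₁}^{T₂} f(x−t)(g∗h)(t) dt. Then for every x ∈ ℝ, (f∗g)∗h(x) = f∗(g∗h)(x), both sides existing. -/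

import Mathlib

open MeasureTheory Filter

lemma aux_inner (u : ℝ → ℂ) (p : ℝ → ℝ) (hp : Monotone p) (a b M s : ℝ) (hab : a ≤ b)
    (hM : ∀ c ∈ Set.Icc a b, ∀ d ∈ Set.Icc a b, ‖∫ t in c..d, u t‖ ≤ M) :
    ‖∫ t in Set.Ioc a b, Set.indicator {t | s < p t} u t‖ ≤ M := by
  have hS : MeasurableSet {t | s < p t} := measurableSet_lt measurable_const hp.measurable
  have hM0 : 0 ≤ M := by
    have := hM a ⟨le_rfl, hab⟩ a ⟨le_rfl, hab⟩
    simpa using this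
  rw [setIntegral_indicator hS]
  by_cases hne : (Set.Ioc a b ∩ {t | s < p t}).Nonempty
  · set W := Set.Ioc a b ∩ {t | s < p t} with hW
    have hbdd : BddBelow W := ⟨a, fun t ht => ht.1.1.le⟩
    have hca : a ≤ sInf W := le_csInf hne (fun t ht => ht.1.1.le)
    have hcb : sInf W ≤ b := by
      obtain ⟨t, ht⟩ := hne
      exact (csInf_le hbdd ht).trans ht.1.2
    have h1 : Set.Ioc (sInf W) b ⊆ W := by
      intro t ht
      obtain ⟨w, hw, hwt⟩ := exists_lt_of_csInf_lt hne ht.1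
      exact ⟨⟨hca.trans_lt ht.1, ht.2⟩, lt_of_lt_of_le hw.2 (hp hwt.le)⟩
    have h2 : W ⊆ Set.Icc (sInf W) b := fun t ht => ⟨csInf_le hbdd ht, ht.1.2⟩
    have h3 : W =ᵐ[volume] Set.Ioc (sInf W) b := by
      apply Filter.EventuallyLE.antisymm
      · exact (HasSubset.Subset.eventuallyLE h2).trans (Ioc_ae_eq_Icc (μ := volume)).symm.le
      · exact HasSubset.Subset.eventuallyLE h1
    rw [setIntegral_congr_set h3, ← intervalIntegral.integral_of_le hcb]
    exact hM _ ⟨hca, hcb⟩ _ ⟨hab, le_rfl⟩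
  · rw [Set.not_nonempty_iff_eq_empty] at hne
    rw [hne]
    simpa using hM0

lemma aux_layer (A B r : ℝ) (hA : A ≤ r) (hB : r ≤ B) (z : ℂ) :
    ∫ s in Set.Ioc A B, (if s < r then z else 0) = ((r - A : ℝ) : ℂ) * z := by
  have : (fun s : ℝ => if s < r then z else 0) = Set.indicator (Set.Iio r) (fun _ => z) := by
    ext s; simp [Set.indicator]
  rw [this, setIntegral_indicator measurableSet_Iio]
  have h2 : Set.Ioc A B ∩ Set.Iio r = Set.Ioo A r := by
    ext s; simp only [Set.mem_inter_iff, Set.mem_Ioc, Set.mem_Iio, Set.mem_Ioo]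
    constructor
    · rintro ⟨⟨h, _⟩, h'⟩; exact ⟨h, h'⟩
    · rintro ⟨h, h'⟩; exact ⟨⟨h, by linarith⟩, h'⟩
  rw [h2, setIntegral_const, Measure.real, Real.volume_Ioo, ENNReal.toReal_ofReal (by linarith)]
  simp

lemma aux_mono (u : ℝ → ℂ) (p : ℝ → ℝ) (hp : Monotone p) (A B a b M : ℝ) (hab : a ≤ b)
    (hA : ∀ t, A ≤ p t) (hB : ∀ t, p t ≤ B) (hu : IntegrableOn u (Set.Ioc a b))
    (hM : ∀ c ∈ Set.Icc a b, ∀ d ∈ Set.Icc a b, ‖∫ t in c..d, u t‖ ≤ M) :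
    ‖∫ t in a..b, u t * (p t : ℂ)‖ ≤ (|A| + (B - A)) * M := by
  have hAB : A ≤ B := (hA 0).trans (hB 0)
  have hInt : Integrable (Function.uncurry fun t s : ℝ => if s < p t then u t else 0)
      ((volume.restrict (Set.Ioc a b)).prod (volume.restrict (Set.Ioc A B))) := by
    have h1 : Integrable (fun z : ℝ × ℝ => u z.1 * (1:ℂ))
      ((volume.restrict (Set.Ioc a b)).prod (volume.restrict (Set.Ioc A B))) :=
      Integrable.mul_prod (f := u) (g := fun _ => (1:ℂ)) hu (integrable_const _)
    have hS : MeasurableSet {z : ℝ × ℝ | z.2 < p z.1} :=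
      measurableSet_lt measurable_snd (hp.measurable.comp measurable_fst)
    refine (h1.indicator hS).congr (Eventually.of_forall fun z => ?_)
    simp [Set.indicator, Function.uncurry]
  have key : ∫ t in Set.Ioc a b, ((p t - A : ℝ) : ℂ) * u t
      = ∫ s in Set.Ioc A B, ∫ t in Set.Ioc a b, Set.indicator {t | s < p t} u t := by
    have := integral_integral_swap hInt
    simp only [Set.indicator, Set.mem_setOf_eq]
    rw [← this]
    congr 1
    ext t
    rw [aux_layer A B (p t) (hA t) (hB t)]
  have hk : ‖∫ t in Set.Ioc a b, ((p t - A : ℝ) : ℂ) * u t‖ ≤ M * (B - A) := by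
    rw [key]
    have := norm_setIntegral_le_of_norm_le_const (μ := volume) (s := Set.Ioc A B) (C := M)
      (f := fun s => ∫ t in Set.Ioc a b, Set.indicator {t | s < p t} u t) (by simp)
      (fun s _ => aux_inner u p hp a b M s hab hM)
    rwa [Measure.real, Real.volume_Ioc, ENNReal.toReal_ofReal (by linarith)] at this
  have hi : IntegrableOn (fun t => ((p t - A : ℝ) : ℂ) * u t) (Set.Ioc a b) := by
    refine Integrable.bdd_mul (c := B - A) hu ?_ ?_
    · exact (Complex.measurable_ofReal.comp (hp.measurable.sub_const A)).aestronglyMeasurable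
    · refine Eventually.of_forall fun t => ?_
      rw [Complex.norm_real, Real.norm_eq_abs, abs_of_nonneg (by linarith [hA t])]
      linarith [hB t]
  have e : ∫ t in a..b, u t * (p t : ℂ)
      = (∫ t in Set.Ioc a b, ((p t - A : ℝ) : ℂ) * u t) + (A:ℂ) * ∫ t in a..b, u t := by
    rw [intervalIntegral.integral_of_le hab, intervalIntegral.integral_of_le hab,
      ← integral_const_mul, ← integral_add hi (hu.const_mul _)]
    congr 1; ext t; push_cast; ring
  rw [e]
  calc _ ≤ _ := norm_add_le _ _
    _ ≤ M * (B - A) + |A| * M := by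
      gcongr
      rw [norm_mul, Complex.norm_real, Real.norm_eq_abs]
      gcongr
      exact hM a ⟨le_rfl, hab⟩ b ⟨hab, le_rfl⟩
    _ = _ := by ring

lemma aux_decomp (g : ℝ → ℝ) (hg : BoundedVariationOn g Set.univ) :
    ∃ (p q : ℝ → ℝ) (V : ℝ), Monotone p ∧ Monotone q ∧ (∀ t, g t = p t - q t) ∧
      (∀ t, |p t| ≤ V) ∧ (∀ t, |q t| ≤ V) := by
  have hl := hg.locallyBoundedVariationOn
  set V := (eVariationOn g Set.univ).toReal
  have hV : 0 ≤ V := ENNReal.toReal_nonneg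
  have hp : ∀ t, |variationOnFromTo g Set.univ 0 t| ≤ V := by
    intro t
    have hle : ∀ a b : ℝ, (eVariationOn g (Set.univ ∩ Set.Icc a b)).toReal ≤ V := fun a b =>
      ENNReal.toReal_mono hg (eVariationOn.mono _ Set.inter_subset_left)
    unfold variationOnFromTo
    split_ifs
    · rw [abs_of_nonneg ENNReal.toReal_nonneg]; exact hle _ _
    · rw [abs_neg, abs_of_nonneg ENNReal.toReal_nonneg]; exact hle _ _
  refine ⟨variationOnFromTo g Set.univ 0, fun t => variationOnFromTo g Set.univ 0 t - g t,
    V + (V + |g 0|), ?_, ?_, ?_, ?_, ?_⟩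
  · exact monotoneOn_univ.1 (variationOnFromTo.monotoneOn hl (Set.mem_univ 0))
  · exact monotoneOn_univ.1 (variationOnFromTo.sub_self_monotoneOn hl (Set.mem_univ 0))
  · intro t; ring
  · intro t; linarith [hp t, abs_nonneg (g 0)]
  · intro t
    have h1 : |g t - g 0| ≤ V := by
      have := hg.dist_le (Set.mem_univ t) (Set.mem_univ 0)
      rwa [Real.dist_eq] at this
    have h2 := hp t
    rw [abs_le] at *
    constructor <;> cases abs_cases (g 0) <;> linarith

lemma aux_K (g : ℝ → ℝ) (hg : BoundedVariationOn g Set.univ) :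
    Measurable g ∧ ∃ C : ℝ, 0 ≤ C ∧ (∀ t, |g t| ≤ C) ∧
    ∀ (u : ℝ → ℂ) (a b M y : ℝ), a ≤ b → IntegrableOn u (Set.Ioc a b) →
    (∀ c ∈ Set.Icc a b, ∀ d ∈ Set.Icc a b, ‖∫ t in c..d, u t‖ ≤ M) →
    ‖∫ t in a..b, u t * (g (t - y) : ℂ)‖ ≤ C * M := by
  obtain ⟨p, q, V, hp, hq, hgpq, hpV, hqV⟩ := aux_decomp g hg
  have hV : 0 ≤ V := (abs_nonneg _).trans (hpV 0)
  have hgm : Measurable g := by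
    rw [funext hgpq]; exact hp.measurable.sub hq.measurable
  refine ⟨hgm, 6 * V, by linarith, ?_, ?_⟩
  · intro t
    rw [hgpq]
    linarith [abs_sub (p t) (q t), hpV t, hqV t]
  · intro u a b M y hab hu hM
    have hm : ∀ r : ℝ → ℝ, Monotone r → (∀ t, |r t| ≤ V) →
        ‖∫ t in a..b, u t * (r (t - y) : ℂ)‖ ≤ 3 * V * M ∧
        IntervalIntegrable (fun t => u t * (r (t - y) : ℂ)) volume a b := by
      intro r hr hrV
      constructor
      · have := aux_mono u (fun t => r (t - y)) (fun s t hst => hr (by linarith)) (-V) V a b M hab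
          (fun t => (abs_le.1 (hrV _)).1) (fun t => (abs_le.1 (hrV _)).2) hu hM
        rw [abs_neg, abs_of_nonneg hV] at this
        linarith
      · rw [intervalIntegrable_iff_integrableOn_Ioc_of_le hab]
        refine Integrable.mul_bdd (c := V) hu ?_ ?_
        · exact (Complex.measurable_ofReal.comp
            (hr.measurable.comp (measurable_id.sub_const y))).aestronglyMeasurable
        · refine Eventually.of_forall fun t => ?_
          rw [Complex.norm_real, Real.norm_eq_abs]; exact hrV _
    obtain ⟨p1, p2⟩ := hm p hp hpV
    obtain ⟨q1, q2⟩ := hm q hq hqV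
    have : ∫ t in a..b, u t * (g (t - y) : ℂ) = (∫ t in a..b, u t * (p (t - y) : ℂ))
        - ∫ t in a..b, u t * (q (t - y) : ℂ) := by
      rw [← intervalIntegral.integral_sub p2 q2]
      congr 1; ext t; rw [hgpq]; push_cast; ring
    rw [this]
    linarith [norm_sub_le (∫ t in a..b, u t * (p (t - y) : ℂ)) (∫ t in a..b, u t * (q (t - y) : ℂ))]

/-- Cauchy transfer. -/
lemma aux_cauchy (U G : ℝ → ℂ) (C : ℝ) (hC : 0 ≤ C) (φ : ℝ → ℝ)
    (hφ : ∀ N, ∀ m ≥ N, ∀ n ≥ N, ∀ c ∈ Set.uIcc (φ m) (φ n), ∃ k ≥ N, c = φ k)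
    (hG : ∀ a b M : ℝ, (∀ c ∈ Set.uIcc a b, ∀ d ∈ Set.uIcc a b, ‖U d - U c‖ ≤ M) →
      ‖G b - G a‖ ≤ C * M)
    (hU : ∃ l, Tendsto (fun x => U (φ x)) atTop (nhds l)) :
    ∃ l, Tendsto (fun x => G (φ x)) atTop (nhds l) := by
  obtain ⟨l, hl⟩ := hU
  apply cauchySeq_tendsto_of_complete
  have hc := hl.cauchySeq
  rw [Metric.cauchySeq_iff] at hc ⊢
  intro ε hε
  obtain ⟨N, hN⟩ := hc (ε / (C + 1)) (by positivity)
  refine ⟨N, fun m hm n hn => ?_⟩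
  rw [dist_eq_norm]
  have := hG (φ n) (φ m) (ε / (C + 1)) (by
    intro c hc d hd
    obtain ⟨k, hk, rfl⟩ := hφ N n hn m hm c hc
    obtain ⟨j, hj, rfl⟩ := hφ N n hn m hm d hd
    rw [← dist_eq_norm]
    exact (hN j hj k hk).le)
  refine this.trans_lt ?_
  rw [mul_div_assoc', div_lt_iff₀ (by positivity)]
  nlinarith

theorem stmt11 (f : ℝ → ℂ) (g : ℝ → ℝ) (h : ℝ → ℂ)
    (hf : ∀ a b : ℝ, IntegrableOn f (Set.Icc a b))
    (hF₁ : ∃ c : ℂ, Tendsto (fun x : ℝ => ∫ t in (0:ℝ)..x, f t) atTop (nhds c))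
    (hF₂ : ∃ c : ℂ, Tendsto (fun x : ℝ => ∫ t in (0:ℝ)..x, f t) atBot (nhds c))
    (hg : BoundedVariationOn g Set.univ)
    (hh : Integrable h) :
    ∃ fg : ℝ → ℂ,
      -- the improper convolution f∗g exists at every point
      (∀ x : ℝ, Tendsto (fun T : ℝ × ℝ =>
          ∫ t in (-T.1)..T.2, f (x - t) * ((g t : ℝ) : ℂ))
        (atTop ×ˢ atTop) (nhds (fg x))) ∧
      ∀ x : ℝ,
        -- (f∗g)∗h(x) exists as a Lebesgue integral
        Integrable (fun y : ℝ => fg (x - y) * h y) ∧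
        -- f∗(g∗h)(x) exists as an improper integral and equals (f∗g)∗h(x)
        Tendsto (fun T : ℝ × ℝ =>
            ∫ t in (-T.1)..T.2, f (x - t) * (∫ y : ℝ, ((g (t - y) : ℝ) : ℂ) * h y))
          (atTop ×ˢ atTop) (nhds (∫ y : ℝ, fg (x - y) * h y)) := by
  obtain ⟨hgm, C, hC, hgC, hK⟩ := aux_K g hg
  set F : ℝ → ℂ := fun x : ℝ => ∫ t in (0:ℝ)..x, f t with hFdef
  have hfi : ∀ a b, IntervalIntegrable f volume a b := fun a b => by
    rw [intervalIntegrable_iff']; exact hf _ _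
  -- F bounded
  have hFb : ∃ B, ∀ x, ‖F x‖ ≤ B := by
    have hcont : Continuous F := intervalIntegral.continuous_primitive hfi 0
    obtain ⟨c, hc⟩ := hF₁
    obtain ⟨d, hd⟩ := hF₂
    have h1 := (hc.norm.eventually_le_const (lt_add_one ‖c‖))
    have h2 := (hd.norm.eventually_le_const (lt_add_one ‖d‖))
    obtain ⟨N, hN⟩ := eventually_atTop.1 h1
    obtain ⟨N', hN'⟩ := eventually_atBot.1 h2
    obtain ⟨D, hD⟩ := (isCompact_Icc (a := N') (b := N)).exists_bound_of_continuousOn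
      hcont.continuousOn
    refine ⟨max D (max (‖c‖ + 1) (‖d‖ + 1)), fun x => ?_⟩
    rcases le_total N x with hx | hx
    · exact (hN x hx).trans ((le_max_left _ _).trans (le_max_right _ _))
    rcases le_total x N' with hx' | hx'
    · exact (hN' x hx').trans ((le_max_right _ _).trans (le_max_right _ _))
    · exact (hD x ⟨hx', hx⟩).trans (le_max_left _ _)
  obtain ⟨B, hB⟩ := hFb
  have hui : ∀ x a b, IntervalIntegrable (fun t => f (x - t)) volume a b := fun x a b => by
    have := (hfi (x - a) (x - b)).comp_sub_left x
    simpa using this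
  have hUF : ∀ x a b, ∫ t in a..b, f (x - t) = F (x - a) - F (x - b) := by
    intro x a b
    rw [intervalIntegral.integral_comp_sub_left, hFdef]
    exact (intervalIntegral.integral_interval_sub_left (hfi _ _) (hfi _ _)).symm
  have hgi : ∀ x y a b, IntervalIntegrable (fun t => f (x - t) * (g (t - y) : ℂ)) volume a b := by
    intro x y a b
    rw [intervalIntegrable_iff]
    refine Integrable.mul_bdd (c := C) (intervalIntegrable_iff.1 (hui x a b)) ?_ ?_
    · exact (Complex.measurable_ofReal.comp
        (hgm.comp (measurable_id.sub_const y))).aestronglyMeasurable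
    · refine Eventually.of_forall fun t => ?_
      rw [Complex.norm_real, Real.norm_eq_abs]; exact hgC _
  have hex : ∀ x : ℝ, ∃ l, Tendsto (fun T : ℝ × ℝ =>
          ∫ t in (-T.1)..T.2, f (x - t) * ((g t : ℝ) : ℂ))
        (atTop ×ˢ atTop) (nhds l) := by
    intro x
    set G : ℝ → ℂ := fun r => ∫ t in (0:ℝ)..r, f (x - t) * ((g t : ℝ) : ℂ) with hG
    have hgi0 : ∀ a b, IntervalIntegrable (fun t => f (x - t) * (g t : ℂ)) volume a b := by
      intro a b; simpa using hgi x 0 a b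
    have hGd : ∀ a b, G b - G a = ∫ t in a..b, f (x - t) * ((g t : ℝ) : ℂ) := fun a b =>
      intervalIntegral.integral_interval_sub_left (hgi0 _ _) (hgi0 _ _)
    have hGle : ∀ a b M : ℝ, (∀ c ∈ Set.uIcc a b, ∀ d ∈ Set.uIcc a b,
        ‖F (x - d) - F (x - c)‖ ≤ M) → ‖G b - G a‖ ≤ C * M := by
      have main : ∀ a b M : ℝ, a ≤ b → (∀ c ∈ Set.uIcc a b, ∀ d ∈ Set.uIcc a b,
        ‖F (x - d) - F (x - c)‖ ≤ M) → ‖G b - G a‖ ≤ C * M := by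
        intro a b M hab hM
        rw [Set.uIcc_of_le hab] at hM
        have := hK (fun t => f (x - t)) a b M 0 hab (hui x a b).1 (fun c hc d hd => by
          rw [hUF]; exact hM d hd c hc)
        rw [hGd]
        simpa using this
      intro a b M hM
      rcases le_total a b with hab | hab
      · exact main a b M hab hM
      · rw [norm_sub_rev]
        exact main b a M hab (by rwa [Set.uIcc_comm])
    obtain ⟨l1, h1⟩ := aux_cauchy (fun r => F (x - r)) G C hC id (by
      intro N m hm n hn c hc
      exact ⟨c, (le_min hm hn).trans hc.1, rfl⟩) hGle (by
      obtain ⟨d, hd⟩ := hF₂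
      exact ⟨d, hd.comp (by simpa [sub_eq_add_neg] using
        tendsto_atBot_add_const_left atTop x tendsto_neg_atTop_atBot)⟩)
    obtain ⟨l2, h2⟩ := aux_cauchy (fun r => F (x - r)) G C hC (fun r => -r) (by
      intro N m hm n hn c hc
      refine ⟨-c, ?_, by simp⟩
      have := hc.2.trans (max_le (neg_le_neg hm) (neg_le_neg hn))
      show N ≤ -c
      linarith) hGle (by
      obtain ⟨d, hd⟩ := hF₁
      exact ⟨d, hd.comp (by simpa [sub_eq_add_neg] using
        tendsto_atTop_add_const_left atTop x tendsto_id)⟩)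
    refine ⟨l1 - l2, ?_⟩
    have := (h1.comp (tendsto_snd (f := (atTop : Filter ℝ)) (g := (atTop : Filter ℝ)))).sub
      (h2.comp (tendsto_fst (f := (atTop : Filter ℝ)) (g := (atTop : Filter ℝ))))
    refine this.congr fun T => ?_
    exact hGd _ _
  choose fg hfg using hex
  refine ⟨fg, hfg, fun x => ?_⟩
  set Φ : ℝ × ℝ → ℝ → ℂ := fun T y => ∫ t in (-T.1)..T.2, f (x - t) * (g (t - y) : ℂ) with hΦ
  have hlim : ∀ y, Tendsto (fun T => Φ T y) (atTop ×ˢ atTop) (nhds (fg (x - y))) := by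
    intro y
    have hs : Tendsto (fun T : ℝ × ℝ => (T.1 + y, T.2 - y)) (atTop ×ˢ atTop) (atTop ×ˢ atTop) :=
      Tendsto.prodMap (tendsto_atTop_add_const_right atTop y tendsto_id)
        (by simpa [sub_eq_add_neg] using tendsto_atTop_add_const_right atTop (-y) tendsto_id)
    refine ((hfg (x - y)).comp hs).congr fun T => ?_
    have := intervalIntegral.integral_comp_sub_right (a := -T.1) (b := T.2)
      (fun s => f (x - y - s) * (g s : ℂ)) y
    simp only [sub_sub_sub_cancel_right] at this
    simp only [hΦ, Function.comp]
    rw [this]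
    congr 1
    ring
  have hbd : ∀ T : ℝ × ℝ, 0 ≤ T.1 → 0 ≤ T.2 → ∀ y, ‖Φ T y‖ ≤ C * (B + B) := by
    intro T h1 h2 y
    refine hK (fun t => f (x - t)) _ _ _ y (by linarith) (hui x _ _).1 (fun c _ d _ => ?_)
    rw [hUF]
    exact (norm_sub_le _ _).trans (add_le_add (hB _) (hB _))
  have hprod : ∀ T : ℝ × ℝ, -T.1 ≤ T.2 → Integrable
      (Function.uncurry fun t y : ℝ => f (x - t) * (g (t - y) : ℂ) * h y)
      ((volume.restrict (Set.Ioc (-T.1) T.2)).prod volume) := by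
    intro T hT
    have h1 : Integrable (fun z : ℝ × ℝ => f (x - z.1) * h z.2)
      ((volume.restrict (Set.Ioc (-T.1) T.2)).prod volume) :=
      Integrable.mul_prod (f := fun t => f (x - t)) (g := h) (hui x _ _).1 hh
    have h2 := Integrable.mul_bdd (c := C) (g := fun z : ℝ × ℝ => (g (z.1 - z.2) : ℂ)) h1
      (Complex.measurable_ofReal.comp
        (hgm.comp (measurable_fst.sub measurable_snd))).aestronglyMeasurable
      (Eventually.of_forall fun z => by
        rw [Complex.norm_real, Real.norm_eq_abs]; exact hgC _)
    refine h2.congr (Eventually.of_forall fun z => ?_)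
    simp only [Function.uncurry]
    ring
  have hΦh : ∀ T : ℝ × ℝ, -T.1 ≤ T.2 →
      (fun y => ∫ t in Set.Ioc (-T.1) T.2, f (x - t) * (g (t - y) : ℂ) * h y)
        = fun y => Φ T y * h y := by
    intro T hT
    ext y
    rw [integral_mul_const, hΦ]
    simp only
    rw [intervalIntegral.integral_of_le hT]
  have hmeas : ∀ T : ℝ × ℝ, -T.1 ≤ T.2 → AEStronglyMeasurable (fun y => Φ T y * h y) volume := by
    intro T hT
    rw [← hΦh T hT]
    exact (hprod T hT).integral_prod_right.aestronglyMeasurable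
  have hswap : ∀ T : ℝ × ℝ, -T.1 ≤ T.2 →
      ∫ t in (-T.1)..T.2, f (x - t) * (∫ y : ℝ, ((g (t - y) : ℝ) : ℂ) * h y)
      = ∫ y, Φ T y * h y := by
    intro T hT
    rw [← hΦh T hT, ← integral_integral_swap (hprod T hT), intervalIntegral.integral_of_le hT]
    congr 1
    ext t
    rw [← integral_const_mul]
    congr 1
    ext y
    ring
  have hpos : ∀ᶠ T : ℝ × ℝ in atTop ×ˢ atTop, 0 ≤ T.1 ∧ 0 ≤ T.2 :=
    (eventually_ge_atTop 0).prod_mk (eventually_ge_atTop 0)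
  have hlimh : ∀ y, Tendsto (fun T => Φ T y * h y) (atTop ×ˢ atTop) (nhds (fg (x - y) * h y)) :=
    fun y => (hlim y).mul_const _
  have hfgle : ∀ y, ‖fg (x - y)‖ ≤ C * (B + B) := fun y =>
    le_of_tendsto (hlim y).norm (hpos.mono fun T hT => hbd T hT.1 hT.2 y)
  have hlm : AEStronglyMeasurable (fun y => fg (x - y) * h y) volume := by
    have hn : Tendsto (fun n : ℕ => ((n : ℝ), (n : ℝ))) atTop (atTop ×ˢ atTop) :=
      tendsto_natCast_atTop_atTop.prodMk tendsto_natCast_atTop_atTop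
    refine aestronglyMeasurable_of_tendsto_ae atTop
      (f := fun (n : ℕ) y => Φ ((n : ℝ), (n : ℝ)) y * h y) (fun n => hmeas _ ?_)
      (Eventually.of_forall fun y => (hlimh y).comp hn)
    have : (0:ℝ) ≤ n := n.cast_nonneg
    simp only
    linarith
  constructor
  · refine (hh.norm.const_mul (C * (B + B))).mono' hlm (Eventually.of_forall fun y => ?_)
    rw [norm_mul]
    exact mul_le_mul_of_nonneg_right (hfgle y) (norm_nonneg _)
  · have hd : Tendsto (fun T => ∫ y, Φ T y * h y) (atTop ×ˢ atTop)
        (nhds (∫ y : ℝ, fg (x - y) * h y)) := by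
      refine tendsto_integral_filter_of_dominated_convergence (fun y => C * (B + B) * ‖h y‖)
        ?_ ?_ (hh.norm.const_mul _) (Eventually.of_forall hlimh)
      · exact hpos.mono fun T hT => hmeas T (by linarith [hT.1, hT.2])
      · refine hpos.mono fun T hT => Eventually.of_forall fun y => ?_
        rw [norm_mul]
        exact mul_le_mul_of_nonneg_right (hbd T hT.1 hT.2 y) (norm_nonneg _)
    refine hd.congr' (hpos.mono fun T hT => (hswap T (by linarith [hT.1, hT.2])).symm)
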